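/- If n, m, a are non-negative integers with n > 200, m ≥ 1, n − m ≥ 3, and F_n − F_m = 13^a, then n − m ≤ 160 and moreover n < 1.58996 · 10^{16}. -/

import Mathlib

/-!
The equation `F_n - F_m = 13 ^ a` has no solution at all with `a ≥ 2`, and this can be seen from
congruences alone; since `F_n - F_m ≥ F_{n-2} > 13` in the range considered, the hypotheses are
contradictory.

The obstruction combines two kinds of information on `D = F_n - F_m`.
* `a ≥ 2` gives `169 ∣ D`. The Fibonacci sequence has period `364 = 28 * 13` modulo `169`, so this
  leaves few pairs `(n, m)` modulo `364`.
* If `13 ^ e ≡ 1 (mod p)`, then `D ^ e = (13 ^ e) ^ a ≡ 1 (mod p)`, whatever `a` is. This is used for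
  `p = 233, 29, 521, 2, 79, 211, 859`, whose Fibonacci periods `52, 14, 26, 3, 78, 42, 78` all divide
  `1092 = 364 * 3`, with `e` the order of `13` modulo `p`.

No pair `(n, m)` modulo `1092` satisfies all these conditions, which is a finite computation
(`sieve`).
-/

/-- The triples `(p, π, e)` of the sieve: `π` is a period of the Fibonacci sequence modulo `p`, and
`13 ^ e ≡ 1` modulo `p`. -/
def sieveData : List (ℕ × ℕ × ℕ) :=
  [(233, 52, 116), (29, 14, 14), (521, 26, 260), (2, 3, 1), (79, 78, 39), (211, 42, 35),
    (859, 78, 11)]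

/-- `passesAt x y t`, for `t = (p, π, e)`: whether the `e`-th power of `F_x - F_y` is `1` modulo `p`,
where the indices are first reduced modulo `π`. The difference is represented by the natural number
`F_x + (p - F_y % p)`. -/
def passesAt (x y : ℕ) (t : ℕ × ℕ × ℕ) : Bool :=
  ((Nat.fib (x % t.2.1) + (t.1 - Nat.fib (y % t.2.1) % t.1)) ^ t.2.2 % t.1).beq 1

/-- `existsBelow n f` tells whether `f i` holds for some `i < n`. -/
def existsBelow (n : ℕ) (f : ℕ → Bool) : Bool := (List.range n).any f

theorem existsBelow_of {n i : ℕ} {f : ℕ → Bool} (hi : i < n) (h : f i = true) :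
    existsBelow n f = true :=
  List.any_eq_true.2 ⟨i, List.mem_range.2 hi, h⟩

/-- The residue of `F_{x + 28 * i}` modulo `169`, computed from small indices. Since
`F_{x + 28} = F_x F_27 + F_{x + 1} F_28`, with `F_27 ≡ 1 + 13 * 3` and `F_28 ≡ 13 * 7` modulo `169`,
translating the index by `28` is the identity modulo `13`, hence to first order in `13` its `i`-th
iterate is linear in `i`. -/
def fibMod169 (x i : ℕ) : ℕ :=
  (Nat.fib x + 13 * i * (7 * Nat.fib (x + 1) + 3 * Nat.fib x)) % 169

theorem fibMod169_eq (x i : ℕ) : fibMod169 x i = Nat.fib (x + 28 * i) % 169 := by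
  induction i generalizing x with
  | zero => simp [fibMod169]
  | succ i ih =>
    have h28 : Nat.fib (x + 28) = Nat.fib x * 196418 + Nat.fib (x + 1) * 317811 :=
      Nat.fib_add x 27
    have h29 : Nat.fib (x + 28 + 1) = Nat.fib x * 317811 + Nat.fib (x + 1) * 514229 :=
      Nat.fib_add x 28
    rw [show x + 28 * (i + 1) = x + 28 + 28 * i by ring, ← ih]
    unfold fibMod169
    rw [h28, h29]
    have e : Nat.fib x * 196418 + Nat.fib (x + 1) * 317811 +
        13 * i * (7 * (Nat.fib x * 317811 + Nat.fib (x + 1) * 514229) +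
          3 * (Nat.fib x * 196418 + Nat.fib (x + 1) * 317811)) =
        Nat.fib x + 13 * (i + 1) * (7 * Nat.fib (x + 1) + 3 * Nat.fib x) +
        169 * (1162 * Nat.fib x + 1880 * Nat.fib (x + 1) +
          i * (216456 * Nat.fib x + 350233 * Nat.fib (x + 1))) := by ring
    rw [e, Nat.add_mul_mod_self_left]

/-- The finite search for a pair of residues modulo `1092 = 28 * 13 * 3` that passes all the tests.
Residues are written `x + 28 * i + 364 * k`, so that the congruence modulo `13` (period `28`) is
tested first, then those modulo `169`, `233`, `29`, `521` (period dividing `364`), then the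
others. -/
def sieveSearch : Bool :=
  existsBelow 28 fun x => existsBelow 28 fun y =>
    (Nat.fib x % 13).beq (Nat.fib y % 13) &&
    existsBelow 13 fun i => existsBelow 13 fun j =>
      (fibMod169 x i).beq (fibMod169 y j) &&
      ((sieveData.take 3).all (passesAt (x + 28 * i) (y + 28 * j)) &&
      existsBelow 3 fun k => existsBelow 3 fun l =>
        (sieveData.drop 3).all (passesAt (x + 28 * i + 364 * k) (y + 28 * j + 364 * l)))

theorem sieve : sieveSearch = false := by
  decide +kernel

theorem fib_mod_of_period {p q : ℕ} (h0 : Nat.fib q % p = 0) (h1 : Nat.fib (q + 1) % p = 1 % p)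
    (n : ℕ) : Nat.fib (n % q) ≡ Nat.fib n [MOD p] := by
  have key : ∀ n, Nat.fib (n + q) ≡ Nat.fib n [MOD p] := by
    intro n
    cases n with
    | zero => simpa [Nat.ModEq] using h0
    | succ n =>
      have h : Nat.fib (n + 1 + q) = Nat.fib n * Nat.fib q + Nat.fib (n + 1) * Nat.fib (q + 1) := by
        rw [← Nat.fib_add]
        congr 1
        omega
      rw [h]
      have e0 : Nat.fib q ≡ 0 [MOD p] := by simpa [Nat.ModEq] using h0
      have e1 : Nat.fib (q + 1) ≡ 1 [MOD p] := h1
      simpa using (e0.mul_left (Nat.fib n)).add (e1.mul_left (Nat.fib (n + 1)))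
  have hp : Function.Periodic (fun n => Nat.fib n % p) q := key
  exact hp.map_mod_nat n

theorem sieveData_spec : ∀ t ∈ sieveData, 1 < t.1 ∧ Nat.fib t.2.1 % t.1 = 0 ∧
    Nat.fib (t.2.1 + 1) % t.1 = 1 % t.1 ∧ 13 ^ t.2.2 % t.1 = 1 % t.1 := by
  decide +kernel

theorem passesAt_of_eq {n m a : ℕ} (h : Nat.fib n = Nat.fib m + 13 ^ a) {t : ℕ × ℕ × ℕ}
    (ht : t ∈ sieveData) : passesAt n m t = true := by
  obtain ⟨hp, h0, h1, h13⟩ := sieveData_spec t ht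
  obtain ⟨p, q, e⟩ := t
  simp only at hp h0 h1 h13
  have hn := fib_mod_of_period h0 h1 n
  have hm := fib_mod_of_period h0 h1 m
  have hlt : Nat.fib (m % q) % p < p := Nat.mod_lt _ (by omega)
  have hd : Nat.fib (n % q) + (p - Nat.fib (m % q) % p) ≡ 13 ^ a [MOD p] := by
    refine Nat.ModEq.add_right_cancel' (Nat.fib (m % q) % p) ?_
    have e1 : Nat.fib (n % q) + (p - Nat.fib (m % q) % p) + Nat.fib (m % q) % p
        = Nat.fib (n % q) + p := by omega
    rw [e1]
    calc Nat.fib (n % q) + p ≡ Nat.fib n [MOD p] := by simpa [Nat.ModEq] using hn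
      _ = 13 ^ a + Nat.fib m := by rw [h, add_comm]
      _ ≡ 13 ^ a + Nat.fib (m % q) % p [MOD p] :=
        (hm.symm.trans (Nat.mod_modEq _ _).symm).add_left _
  have h13' : 13 ^ e ≡ 1 [MOD p] := h13
  have hfin : (Nat.fib (n % q) + (p - Nat.fib (m % q) % p)) ^ e ≡ 1 [MOD p] := by
    refine (hd.pow e).trans ?_
    rw [← pow_mul, mul_comm, pow_mul]
    simpa using h13'.pow a
  exact (Iff.of_eq Nat.beq_eq).2 (Eq.trans hfin (Nat.mod_eq_of_lt hp))

/-- There is no solution with `a ≥ 2`, for any indices `n` and `m`. -/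
theorem fib_ne_fib_add_pow {n m a : ℕ} (ha : 2 ≤ a) : Nat.fib n ≠ Nat.fib m + 13 ^ a := by
  intro h
  have h169 : Nat.fib n ≡ Nat.fib m [MOD 169] := by
    obtain ⟨b, rfl⟩ := Nat.exists_eq_add_of_le ha
    rw [h, pow_add]
    simp [Nat.ModEq]
  have h13 : Nat.fib n ≡ Nat.fib m [MOD 13] := h169.of_dvd (by norm_num)
  have p13 := fib_mod_of_period (p := 13) (q := 28) (by decide +kernel) (by decide +kernel)
  have p169 := fib_mod_of_period (p := 169) (q := 364) (by decide +kernel) (by decide +kernel)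
  have r364 : ∀ n : ℕ, n % 28 + 28 * (n / 28 % 13) = n % 364 := by omega
  have r1092 : ∀ n : ℕ, n % 364 + 364 * (n / 364 % 3) = n % 1092 := by omega
  have pass364 : ∀ t ∈ sieveData.take 3, passesAt (n % 364) (m % 364) t = true := by
    intro t ht
    have hq : t.2.1 ∣ 364 := (by decide : ∀ t ∈ sieveData.take 3, t.2.1 ∣ 364) t ht
    have := passesAt_of_eq h (List.mem_of_mem_take ht)
    unfold passesAt at this ⊢
    rwa [Nat.mod_mod_of_dvd _ hq, Nat.mod_mod_of_dvd _ hq]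
  have pass1092 : ∀ t ∈ sieveData.drop 3, passesAt (n % 1092) (m % 1092) t = true := by
    intro t ht
    have hq : t.2.1 ∣ 1092 := (by decide : ∀ t ∈ sieveData.drop 3, t.2.1 ∣ 1092) t ht
    have := passesAt_of_eq h (List.mem_of_mem_drop ht)
    unfold passesAt at this ⊢
    rwa [Nat.mod_mod_of_dvd _ hq, Nat.mod_mod_of_dvd _ hq]
  refine Bool.false_ne_true (sieve.symm.trans ?_)
  refine existsBelow_of (Nat.mod_lt n (by norm_num)) (existsBelow_of (Nat.mod_lt m (by norm_num))
    (Bool.and_eq_true_iff.2 ⟨?_, ?_⟩))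
  · exact (Iff.of_eq Nat.beq_eq).2 ((p13 n).trans (h13.trans (p13 m).symm))
  refine existsBelow_of (Nat.mod_lt (n / 28) (by norm_num)) (existsBelow_of
    (Nat.mod_lt (m / 28) (by norm_num)) (Bool.and_eq_true_iff.2 ⟨?_, ?_⟩))
  · rw [fibMod169_eq, fibMod169_eq, r364, r364]
    exact (Iff.of_eq Nat.beq_eq).2 ((p169 n).trans (h169.trans (p169 m).symm))
  rw [r364, r364]
  refine Bool.and_eq_true_iff.2 ⟨List.all_eq_true.2 pass364, ?_⟩
  refine existsBelow_of (Nat.mod_lt (n / 364) (by norm_num)) (existsBelow_of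
    (Nat.mod_lt (m / 364) (by norm_num)) ?_)
  rw [r1092, r1092]
  exact List.all_eq_true.2 pass1092

/-- If `n > 200`, `m ≥ 1`, `n - m ≥ 3` and `F_n - F_m = 13 ^ a`, then `n - m ≤ 160`
and `n < 1.58996 · 10^16`. -/
theorem fib_sub_fib_pow_thirteen_reduced_bound (n m a : ℕ) (hn : 200 < n) (hm : 1 ≤ m)
    (hnm : 3 ≤ n - m) (h : (Nat.fib n : ℤ) - Nat.fib m = 13 ^ a) :
    n - m ≤ 160 ∧ (n : ℝ) < 1.58996 * 10 ^ 16 := by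
  exfalso
  have h' : Nat.fib n = Nat.fib m + 13 ^ a := by
    zify
    linarith
  refine fib_ne_fib_add_pow (a := a) ?_ h'
  by_contra! ha
  have hpow : 13 ^ a ≤ 13 := by
    simpa using Nat.pow_le_pow_right (n := 13) (by norm_num) (show a ≤ 1 by omega)
  obtain ⟨k, rfl⟩ : ∃ k, n = k + 2 := ⟨n - 2, by omega⟩
  have h1 : Nat.fib m ≤ Nat.fib (k + 1) := Nat.fib_mono (by omega)
  have h2 : Nat.fib 8 ≤ Nat.fib k := Nat.fib_mono (by omega)
  have h3 : Nat.fib 8 = 21 := by decide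
  have h4 := Nat.fib_add_two (n := k)
  omega
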